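/- Let n ≥ 1 be an integer, Ω ⊂ ℝⁿ a bounded open set, and let φ̃ : ℝⁿ → ℝ be of class C² on a neighborhood of the closure of Ω and satisfy |∇φ̃(x)| ≥ δ for all x ∈ Ω, for some constant δ > 0. Then there exist s₀ > 0 and M > 0 such that for every s ≥ s₀ and every C¹ function z : ℝⁿ → ℝ whose support is a compact subset of Ω, one has s² ∫_Ω e^{2sφ̃(x)} |z(x)|² dx ≤ M ∫_Ω e^{2sφ̃(x)} |∇z(x)|² dx. -/

import Mathlib

open MeasureTheory Real Set

lemma wp_fderiv_zero {n : ℕ} {z : EuclideanSpace ℝ (Fin n) → ℝ}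
    {K : Set (EuclideanSpace ℝ (Fin n))} (hK : IsCompact K) (h0 : ∀ x ∉ K, z x = 0)
    {x : EuclideanSpace ℝ (Fin n)} (hx : x ∉ K) : z =ᶠ[nhds x] fun _ => (0:ℝ) := by
  filter_upwards [hK.isClosed.isOpen_compl.mem_nhds hx] with y hy using h0 y hy

lemma wp_integrable {n : ℕ} {f : EuclideanSpace ℝ (Fin n) → ℝ}
    {K Ω : Set (EuclideanSpace ℝ (Fin n))} (hK : IsCompact K) (hKΩ : K ⊆ Ω)
    (hf : ContinuousOn f Ω) (h0 : ∀ x ∉ K, f x = 0) : Integrable f volume := by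
  have h1 : IntegrableOn f K volume := (hf.mono hKΩ).integrableOn_compact hK
  rwa [integrableOn_iff_integrable_of_support_subset] at h1
  intro x hx
  by_contra h
  exact hx (h0 x h)

lemma wp_div {n : ℕ} {F : EuclideanSpace ℝ (Fin n) → ℝ}
    {K Ω : Set (EuclideanSpace ℝ (Fin n))} (hK : IsCompact K) (hKΩ : K ⊆ Ω) (hΩ : IsOpen Ω)
    (hF : ContDiffOn ℝ 1 F Ω) (h0 : ∀ x ∉ K, F x = 0) (v : EuclideanSpace ℝ (Fin n)) :
    Integrable (fun x => fderiv ℝ F x v) volume ∧ ∫ x in Ω, fderiv ℝ F x v = 0 := by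
  have hd0 : ∀ x ∉ K, fderiv ℝ F x v = 0 := by
    intro x hx
    rw [(wp_fderiv_zero hK h0 hx).fderiv_eq]; simp
  have hFi : Integrable F volume := wp_integrable hK hKΩ hF.continuousOn h0
  have hdi : Integrable (fun x => fderiv ℝ F x v) volume :=
    wp_integrable hK hKΩ
      ((hF.continuousOn_fderiv_of_isOpen hΩ le_rfl).clm_apply continuousOn_const) hd0
  refine ⟨hdi, ?_⟩
  have hdiff : Differentiable ℝ F := by
    intro x
    by_cases hx : x ∈ K
    · exact (hF.contDiffAt (hΩ.mem_nhds (hKΩ hx))).differentiableAt one_ne_zero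
    · exact (wp_fderiv_zero hK h0 hx).differentiableAt_iff.2 (differentiableAt_const _)
  rw [setIntegral_eq_integral_of_forall_compl_eq_zero (fun x hx => hd0 x (fun h => hx (hKΩ h)))]
  have := integral_mul_fderiv_eq_neg_fderiv_mul_of_integrable (𝕜 := ℝ)
    (μ := (volume : Measure (EuclideanSpace ℝ (Fin n))))
    (f := fun _ => (1:ℝ)) (g := F) (v := v) (by simp) (by simpa using hdi) (by simpa using hFi)
    (fun x _ => differentiableAt_const _) (fun x _ => hdiff x)
  simpa using this

lemma wp_inner_gradient {n : ℕ} (f : EuclideanSpace ℝ (Fin n) → ℝ)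
    (x v : EuclideanSpace ℝ (Fin n)) : inner ℝ (gradient f x) v = fderiv ℝ f x v := by
  simp [gradient]

lemma wp_sum {n : ℕ} (f g : EuclideanSpace ℝ (Fin n) → ℝ) (x : EuclideanSpace ℝ (Fin n)) :
    ∑ i, fderiv ℝ f x (EuclideanSpace.basisFun (Fin n) ℝ i) *
      fderiv ℝ g x (EuclideanSpace.basisFun (Fin n) ℝ i) =
      inner ℝ (gradient f x) (gradient g x) := by
  rw [← (EuclideanSpace.basisFun (Fin n) ℝ).sum_inner_mul_inner]
  refine Finset.sum_congr rfl fun i _ => ?_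
  rw [wp_inner_gradient, real_inner_comm, wp_inner_gradient]

lemma wp_fderiv {n : ℕ} {φ z : EuclideanSpace ℝ (Fin n) → ℝ} {x v : EuclideanSpace ℝ (Fin n)}
    (s : ℝ) (hφ : ContDiffAt ℝ 2 φ x) (hz : DifferentiableAt ℝ z x) :
    fderiv ℝ (fun y => Real.exp (2 * s * φ y) * z y ^ 2 * fderiv ℝ φ y v) x v =
      Real.exp (2 * s * φ x) * (2 * s * z x ^ 2 * (fderiv ℝ φ x v * fderiv ℝ φ x v)
        + 2 * z x * (fderiv ℝ z x v * fderiv ℝ φ x v)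
        + z x ^ 2 * fderiv ℝ (fderiv ℝ φ) x v v) := by
  have h1 : HasFDerivAt φ (fderiv ℝ φ x) x := (hφ.differentiableAt two_ne_zero).hasFDerivAt
  have h2 : HasFDerivAt (fderiv ℝ φ) (fderiv ℝ (fderiv ℝ φ) x) x :=
    ((hφ.fderiv_right (m := 1) (by norm_num)).differentiableAt one_ne_zero).hasFDerivAt
  have h3 := h2.clm_apply (hasFDerivAt_const v x)
  have h4 := (((h1.const_mul (2 * s)).exp.mul (hz.hasFDerivAt.pow 2)).mul h3).fderiv
  have h5 := congrArg (fun L : EuclideanSpace ℝ (Fin n) →L[ℝ] ℝ => L v) h4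
  refine Eq.trans h5 ?_
  simp
  ring

lemma wp_alg {s δ B C w z p q c L : ℝ} (hδ : 0 < δ) (hs : 0 < s) (hC : 2 * C ≤ s * δ ^ 2)
    (hw : 0 ≤ w) (hp : δ ≤ p) (hpB : p ≤ B) (hq : 0 ≤ q) (hc : |c| ≤ q * p) (hL : |L| ≤ C) :
    s * δ ^ 2 * (w * z ^ 2) - 2 * B ^ 2 / (s * δ ^ 2) * (w * q ^ 2) ≤
      w * (2 * s * z ^ 2 * p ^ 2 + 2 * z * c + z ^ 2 * L) := by
  have e : s * δ ^ 2 * (w * z ^ 2) - 2 * B ^ 2 / (s * δ ^ 2) * (w * q ^ 2) =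
    w * (s * δ ^ 2 * z ^ 2 - 2 * B ^ 2 / (s * δ ^ 2) * q ^ 2) := by ring
  rw [e]
  refine mul_le_mul_of_nonneg_left ?_ hw
  have hA : 0 < s * δ ^ 2 := by positivity
  have h1 : s * δ ^ 2 * z ^ 2 ≤ s * z ^ 2 * p ^ 2 := by
    have : δ ^ 2 ≤ p ^ 2 := by gcongr
    nlinarith [mul_le_mul_of_nonneg_left this (by positivity : 0 ≤ s * z ^ 2)]
  have h2 : -(z ^ 2 * L) ≤ s * δ ^ 2 / 2 * z ^ 2 := by
    have := (abs_le.1 hL).1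
    nlinarith [sq_nonneg z]
  have h3 : -(2 * z * c) ≤ 2 * |z| * (q * B) := by
    have h31 : |z * c| ≤ |z| * (q * B) := by
      rw [abs_mul]
      gcongr
      exact hc.trans (by gcongr)
    have := neg_abs_le (z * c)
    linarith
  have h4 : 2 * |z| * (q * B) ≤ s * δ ^ 2 / 2 * z ^ 2 + 2 * B ^ 2 / (s * δ ^ 2) * q ^ 2 := by
    generalize s * δ ^ 2 = A at hA
    rw [← sq_abs z]
    have : A / 2 * |z| ^ 2 + 2 * B ^ 2 / A * q ^ 2 - 2 * |z| * (q * B)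
      = (A * |z| - 2 * (q * B)) ^ 2 / (2 * A) := by field_simp; ring
    have : 0 ≤ (A * |z| - 2 * (q * B)) ^ 2 / (2 * A) := by positivity
    linarith
  linarith

/-- **Weighted Poincaré inequality** (Lemma 2.4): if `φ` is `C²` on a neighborhood of `closure Ω`
and `|∇φ| ≥ δ > 0` on `Ω`, then there are `s₀ > 0` and `M > 0` such that for all `s ≥ s₀` and all
`C¹` functions `z` compactly supported in `Ω`,
`s² ∫_Ω e^{2sφ} z² ≤ M ∫_Ω e^{2sφ} |∇z|²`. -/
theorem weighted_poincare
    (n : ℕ) (hn : 1 ≤ n)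
    (Ω : Set (EuclideanSpace ℝ (Fin n))) (hΩo : IsOpen Ω) (hΩb : Bornology.IsBounded Ω)
    (φ : EuclideanSpace ℝ (Fin n) → ℝ)
    (U : Set (EuclideanSpace ℝ (Fin n))) (hUo : IsOpen U) (hUΩ : closure Ω ⊆ U)
    (hφ : ContDiffOn ℝ 2 φ U)
    (δ : ℝ) (hδ : 0 < δ) (hgrad : ∀ x ∈ Ω, δ ≤ ‖gradient φ x‖) :
    ∃ s₀ > (0:ℝ), ∃ M > (0:ℝ), ∀ s ≥ s₀, ∀ z : EuclideanSpace ℝ (Fin n) → ℝ,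
      ContDiff ℝ 1 z →
      (∃ K : Set (EuclideanSpace ℝ (Fin n)), IsCompact K ∧ K ⊆ Ω ∧ ∀ x ∉ K, z x = 0) →
      s ^ 2 * ∫ x in Ω, Real.exp (2 * s * φ x) * z x ^ 2 ≤
        M * ∫ x in Ω, Real.exp (2 * s * φ x) * ‖gradient z x‖ ^ 2 := by
  have hcpt : IsCompact (closure Ω) := hΩb.isCompact_closure
  have hΩU : Ω ⊆ U := subset_closure.trans hUΩ
  have hd1 : ContDiffOn ℝ 1 (fderiv ℝ φ) U := hφ.fderiv_of_isOpen hUo (by norm_num)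
  have hgn : ∀ f : EuclideanSpace ℝ (Fin n) → ℝ, ∀ x, ‖gradient f x‖ = ‖fderiv ℝ f x‖ := by
    intro f x; simp [gradient]
  let b := EuclideanSpace.basisFun (Fin n) ℝ
  obtain ⟨B₀, hB₀⟩ := hcpt.exists_bound_of_continuousOn (hd1.continuousOn.mono hUΩ)
  have hLc : ContinuousOn (fun x => ∑ i, fderiv ℝ (fderiv ℝ φ) x (b i) (b i)) U := by
    refine continuousOn_finsetSum _ fun i _ => ?_
    exact ((hd1.continuousOn_fderiv_of_isOpen hUo le_rfl).clm_apply continuousOn_const).clm_apply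
      continuousOn_const
  obtain ⟨C₀, hC₀⟩ := hcpt.exists_bound_of_continuousOn (hLc.mono hUΩ)
  set B := |B₀| + 1 with hB
  have hBpos : 0 < B := by positivity
  set C := |C₀| with hC
  refine ⟨1 + 2 * C / δ ^ 2, by positivity, 2 * B ^ 2 / δ ^ 4, by positivity, ?_⟩
  rintro s hs z hz ⟨K, hK, hKΩ, h0⟩
  have hspos : 0 < s := lt_of_lt_of_le (by positivity) hs
  have hsC : 2 * C ≤ s * δ ^ 2 := by
    have : 2 * C / δ ^ 2 ≤ s := by linarith
    rwa [div_le_iff₀ (by positivity)] at this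
  have hwc : ContDiffOn ℝ 1 (fun x => Real.exp (2 * s * φ x)) Ω :=
    ((contDiffOn_const.mul ((hφ.of_le (by norm_num)).mono hΩU))).exp
  have hI : Integrable (fun x => Real.exp (2 * s * φ x) * z x ^ 2) volume :=
    wp_integrable hK hKΩ (hwc.continuousOn.mul (hz.continuous.pow 2).continuousOn)
      (fun x hx => by simp [h0 x hx])
  have hJ : Integrable (fun x => Real.exp (2 * s * φ x) * ‖gradient z x‖ ^ 2) volume := by
    refine wp_integrable hK hKΩ (hwc.continuousOn.mul ?_) ?_
    · simp only [hgn]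
      exact ((hz.continuous_fderiv one_ne_zero).norm.pow 2).continuousOn
    · intro x hx
      rw [hgn, (wp_fderiv_zero hK h0 hx).fderiv_eq]; simp
  have hF := fun i => wp_div (F := fun y => Real.exp (2 * s * φ y) * z y ^ 2 * fderiv ℝ φ y (b i))
    hK hKΩ hΩo ((hwc.mul (hz.pow 2).contDiffOn).mul
      ((hd1.mono hΩU).clm_apply contDiffOn_const)) (fun x hx => by simp [h0 x hx]) (b i)
  have hsum : ∫ x in Ω, ∑ i, fderiv ℝ
      (fun y => Real.exp (2 * s * φ y) * z y ^ 2 * fderiv ℝ φ y (b i)) x (b i) = 0 := by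
    rw [integral_finsetSum _ fun i _ => (hF i).1.integrableOn]
    exact Finset.sum_eq_zero fun i _ => (hF i).2
  have hmono : ∫ x in Ω, (s * δ ^ 2 * (Real.exp (2 * s * φ x) * z x ^ 2)
      - 2 * B ^ 2 / (s * δ ^ 2) * (Real.exp (2 * s * φ x) * ‖gradient z x‖ ^ 2)) ≤ 0 := by
    rw [← hsum]
    refine setIntegral_mono_on
      ((hI.const_mul _).sub (hJ.const_mul _)).integrableOn
      (integrable_finsetSum _ fun i _ => (hF i).1.integrableOn) hΩo.measurableSet ?_
    intro x hx
    have hxc := subset_closure hx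
    have e : ∑ i, fderiv ℝ
        (fun y => Real.exp (2 * s * φ y) * z y ^ 2 * fderiv ℝ φ y (b i)) x (b i) =
        Real.exp (2 * s * φ x) * (2 * s * z x ^ 2 * ‖gradient φ x‖ ^ 2
          + 2 * z x * inner ℝ (gradient z x) (gradient φ x)
          + z x ^ 2 * ∑ i, fderiv ℝ (fderiv ℝ φ) x (b i) (b i)) := by
      rw [← real_inner_self_eq_norm_sq, ← wp_sum, ← wp_sum]
      simp only [Finset.mul_sum, ← Finset.sum_add_distrib]
      refine Finset.sum_congr rfl fun i _ => ?_
      rw [wp_fderiv s (hφ.contDiffAt (hUo.mem_nhds (hΩU hx)))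
        ((hz.differentiable one_ne_zero) x)]
    rw [e]
    refine wp_alg hδ hspos hsC (Real.exp_pos _).le (hgrad x hx) ?_ (norm_nonneg _)
      (abs_real_inner_le_norm _ _) ?_
    · rw [hgn]
      linarith [hB₀ x hxc, le_abs_self B₀]
    · exact (hC₀ x hxc).trans (le_abs_self _)
  rw [integral_sub (hI.const_mul _).integrableOn (hJ.const_mul _).integrableOn,
    integral_const_mul, integral_const_mul] at hmono
  generalize (∫ x in Ω, Real.exp (2 * s * φ x) * z x ^ 2) = I at *
  generalize (∫ x in Ω, Real.exp (2 * s * φ x) * ‖gradient z x‖ ^ 2) = J at *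
  have h := mul_le_mul_of_nonneg_left (sub_nonpos.1 hmono) (by positivity : 0 ≤ s / δ ^ 2)
  calc s ^ 2 * I = s / δ ^ 2 * (s * δ ^ 2 * I) := by field_simp
    _ ≤ _ := h
    _ = _ := by field_simp
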